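/- arXiv:2507.18613 — 2 statements merged into one kernel-verified Lean document; each statement's English description precedes it below -/
import Mathlib

section
/- Let X be a connected topological space and let σ : X → X be a continuous map with σ ∘ σ = id. Assume that the fixed-point set Fix(σ) = {x ∈ X : σ(x) = x} is non-empty and connected. Then the fixed-point set of the induced map Sym2.map σ on the symmetric square Sym²(X), endowed with the quotient topology from X × X, is connected. -/
/-! An unordered pair `s(x, y)` is fixed by `Sym2.map σ` either because `σ` fixes both entries or
because `σ` exchanges them, in which case it is `s(x, σ x)` with `σ (σ x) = x`. The pairs of
each kind form the continuous image of a connected set. If `σ` has a fixed point `x`, the two images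
meet in `s(x, x)`; otherwise only pairs of the second kind occur. -/

open Function Set

theorem fixedPoints_sym2_map {α : Type*} (f : α → α) :
    fixedPoints (Sym2.map f) =
      (fun x ↦ s(x, f x)) '' fixedPoints (f ∘ f) ∪ (fixedPoints f).sym2 := by
  ext ⟨x, y⟩
  change s(f x, f y) = s(x, y) ↔ _
  constructor
  · intro hfix
    rcases Sym2.eq_iff.mp hfix with ⟨hx, hy⟩ | ⟨rfl, hy⟩
    · exact Or.inr ⟨hx, hy⟩
    · exact Or.inl ⟨x, hy, rfl⟩
  · rintro (⟨z, hz : f (f z) = z, hzxy⟩ | ⟨hx, hy⟩)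
    · change s(z, f z) = s(x, y) at hzxy
      calc s(f x, f y) = Sym2.map f s(z, f z) := by rw [hzxy, Sym2.map_mk]
        _ = s(f z, z) := by rw [Sym2.map_mk, hz]
        _ = s(x, y) := by rw [Sym2.eq_swap, hzxy]
    · exact congrArg₂ Sym2.mk hx hy

section Topology

variable {X : Type*} [TopologicalSpace X]

theorem continuous_uncurry_sym2_mk : Continuous (uncurry (Sym2.mk (α := X))) :=
  continuous_quot_mk

theorem isPreconnected_sym2 {s : Set X} (hs : IsPreconnected s) : IsPreconnected s.sym2 := by
  rw [sym2_eq_mk_image]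
  exact (hs.prod hs).image _ continuous_uncurry_sym2_mk.continuousOn

theorem continuousOn_sym2_mk_self_apply {f : X → X} {s : Set X} (hf : ContinuousOn f s) :
    ContinuousOn (fun x ↦ s(x, f x)) s :=
  continuous_uncurry_sym2_mk.comp_continuousOn (continuousOn_id.prodMk hf)

theorem stmt10_general {σ : X → X} (hcont : ContinuousOn σ (fixedPoints (σ ∘ σ)))
    (hperiod : IsConnected (fixedPoints (σ ∘ σ))) (hfixed : IsPreconnected (fixedPoints σ)) :
    IsConnected (fixedPoints (Sym2.map σ)) := by
  have hswapped : IsConnected ((fun x ↦ s(x, σ x)) '' fixedPoints (σ ∘ σ)) :=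
    hperiod.image _ (continuousOn_sym2_mk_self_apply hcont)
  rw [fixedPoints_sym2_map]
  rcases (fixedPoints σ).eq_empty_or_nonempty with hempty | ⟨x, hx⟩
  · simpa only [hempty, sym2_empty, union_empty] using hswapped
  · have hdiag : s(x, x) ∈ (fun x ↦ s(x, σ x)) '' fixedPoints (σ ∘ σ) :=
      ⟨x, hx.comp hx, congrArg (Sym2.mk x) hx⟩
    exact ⟨hswapped.nonempty.inl,
      hswapped.isPreconnected.union s(x, x) hdiag ⟨hx, hx⟩ (isPreconnected_sym2 hfixed)⟩

end Topology

/-- If `σ` is a continuous involution of a connected topological space `X` whose fixed-point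
set is non-empty and connected, then the fixed-point set of the induced involution
`Sym2.map σ` of the symmetric square `Sym²(X)` (with the quotient topology) is connected. -/
theorem stmt10 {X : Type*} [TopologicalSpace X] [ConnectedSpace X]
    (σ : X → X) (hcont : Continuous σ) (hinv : σ ∘ σ = id)
    (hne : {x : X | σ x = x}.Nonempty)
    (hconn : IsConnected {x : X | σ x = x}) :
    IsConnected {p : Sym2 X | Sym2.map σ p = p} := by
  have hperiod : IsConnected (fixedPoints (σ ∘ σ)) := by
    simpa only [hinv, fixedPoints_id] using isConnected_univ
  exact stmt10_general hcont.continuousOn hperiod hconn.isPreconnected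
end

section
/- Let X be a connected topological space and let σ : X → X be a continuous map with σ ∘ σ = id and with no fixed points. Then the fixed-point set of the induced map Sym2.map σ on the symmetric square Sym²(X) (with the quotient topology) equals the image of the continuous map X → Sym²(X), x ↦ ⟦(x, σ(x))⟧; in particular this fixed-point set is connected. -/
/-!
An unordered pair `s(x, y)` is fixed by `Sym2.map σ` either because `σ` fixes both `x` and `y`, or
because `σ` swaps them. The pairs of the second kind are the `s(x, σ x)`, and when `σ` has at most
one fixed point, the only possible pair of the first kind is `s(x, x) = s(x, σ x)`. So the whole
fixed-point set is a continuous image of `X`.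
-/

open Function Set

theorem fixedPoints_sym2Map {α : Type*} {σ : α → α} (hσ : Involutive σ) :
    fixedPoints (Sym2.map σ) = (fixedPoints σ).sym2 ∪ range fun x => s(x, σ x) := by
  refine Subset.antisymm (fun p hp => ?_) (union_subset (fun p hp => ?_) ?_)
  · induction p with | _ x y
    rcases Sym2.eq_iff.1 (show s(σ x, σ y) = s(x, y) from hp) with ⟨hx, hy⟩ | ⟨rfl, -⟩
    · exact Or.inl (mk_mem_sym2_iff.2 ⟨hx, hy⟩)
    · exact Or.inr ⟨x, rfl⟩
  · induction p with | _ x y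
    obtain ⟨hx, hy⟩ := mk_mem_sym2_iff.1 hp
    exact congrArg₂ (fun a b => s(a, b)) hx hy
  · rintro _ ⟨x, rfl⟩
    calc s(σ x, σ (σ x)) = s(σ x, x) := by rw [hσ x]
      _ = s(x, σ x) := Sym2.eq_swap

theorem sym2_fixedPoints_subset_range {α : Type*} {f : α → α} (hf : (fixedPoints f).Subsingleton) :
    (fixedPoints f).sym2 ⊆ range fun x => s(x, f x) := by
  intro p hp
  induction p with | _ x y
  obtain ⟨hx, hy⟩ := mk_mem_sym2_iff.1 hp
  obtain rfl : f x = y := hx.eq.trans (hf hx hy)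
  exact ⟨x, rfl⟩

theorem fixedPoints_sym2Map_eq_range {α : Type*} {σ : α → α} (hσ : Involutive σ)
    (hfix : (fixedPoints σ).Subsingleton) :
    fixedPoints (Sym2.map σ) = range fun x => s(x, σ x) := by
  rw [fixedPoints_sym2Map hσ, union_eq_self_of_subset_left (sym2_fixedPoints_subset_range hfix)]

theorem continuous_sym2_mk {X Y : Type*} [TopologicalSpace X] [TopologicalSpace Y] {f g : X → Y}
    (hf : Continuous f) (hg : Continuous g) : Continuous fun x => s(f x, g x) :=
  continuous_quot_mk.comp (hf.prodMk hg)

theorem stmt11_general {X : Type*} [TopologicalSpace X] [ConnectedSpace X] {σ : X → X}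
    (hcont : Continuous σ) (hσ : Involutive σ) (hfix : (fixedPoints σ).Subsingleton) :
    fixedPoints (Sym2.map σ) = range (fun x => s(x, σ x)) ∧
      IsConnected (fixedPoints (Sym2.map σ)) := by
  have hrange := fixedPoints_sym2Map_eq_range hσ hfix
  exact ⟨hrange, hrange ▸ isConnected_range (continuous_sym2_mk continuous_id hcont)⟩

/-- If `σ` is a fixed-point-free continuous involution of a connected topological space `X`,
then the fixed-point set of the induced involution `Sym2.map σ` of the symmetric square
`Sym²(X)` equals the image of `x ↦ ⟦(x, σ x)⟧`; in particular it is connected. -/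
theorem stmt11 {X : Type*} [TopologicalSpace X] [ConnectedSpace X]
    (σ : X → X) (hcont : Continuous σ) (hinv : σ ∘ σ = id)
    (hfix : ∀ x : X, σ x ≠ x) :
    {p : Sym2 X | Sym2.map σ p = p} = Set.range (fun x : X => s(x, σ x)) ∧
    IsConnected {p : Sym2 X | Sym2.map σ p = p} :=
  stmt11_general hcont (congrFun hinv) fun x hx => absurd hx (hfix x)
end
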